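/- Self-testing of post-selected teleportation implementations: let A, B be nonempty finite types with d_A = |A|, let T ∈ Matrix (A × B) (A × B) ℂ be a POVM element, E ∈ Matrix (B × A) (B × A) ℂ a density matrix, and p ∈ (0,1]. Then (T,E) is a post-selected teleportation protocol with success probability p if and only if |B| ≥ |A| and there exist: nonzero real coefficients λ : A → ℝ with Σ_k λ_k² = 1 and Σ_k 1/λ_k² ≤ 1/p; a nonempty finite type B'; an orthonormal basis (e_k)_{k ∈ A} of ℂ^A; and an orthonormal family (f_k)_{k ∈ A} in ℂ^{B × B'}; such that, setting |λ⟩ = Σ_k λ_k (f_k ⊗ e_k) ∈ ℂ^{(B × B') × A}, |τ⟩ = √p Σ_k (1/λ_k) (e_k ⊗ f_k) ∈ ℂ^{A × (B × B')}, and Π = Σ_k f_k f_k† (an orthogonal projection on ℂ^{B × B'}), one has: E equals the partial trace over B' of the rank-one projector |λ⟩⟨λ| (i.e. E((b,c),(b',c')) = Σ_{y ∈ B'} ⟨λ⟩(((b,y),c)) · conj(⟨λ⟩(((b',y),c')))), and (1_A ⊗ Π) · (T ⊗ 1_{B'}) · (1_A ⊗ Π) = |τ⟩⟨τ| as matrices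 on ℂ^{A × (B × B')}. -/

import Mathlib

open scoped BigOperators ComplexOrder

/-- The map `Φ_{T,E}` sending `ρ` on system `A` to the partial trace over `A` and `B`
of `T · (ρ ⊗ E)`, where `T` acts on `A ⊗ B` and `E` on `B ⊗ C` with `C ≅ A`. -/
noncomputable def teleMap {A B : Type*} [Fintype A] [Fintype B]
    (T : Matrix (A × B) (A × B) ℂ) (E : Matrix (B × A) (B × A) ℂ)
    (ρ : Matrix A A ℂ) : Matrix A A ℂ :=
  Matrix.of fun c c' => ∑ a : A, ∑ a' : A, ∑ b : B, ∑ b' : B,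
    T (a, b) (a', b') * ρ a' a * E (b', c) (b, c')

/-- A density matrix: positive semidefinite with trace one. -/
def IsDensityMatrix {A : Type*} [Fintype A] (ρ : Matrix A A ℂ) : Prop :=
  ρ.PosSemidef ∧ ρ.trace = 1

/-- A POVM element: positive semidefinite and below the identity. -/
def IsPOVMElement {A : Type*} [Fintype A] [DecidableEq A] (T : Matrix A A ℂ) : Prop :=
  T.PosSemidef ∧ (1 - T).PosSemidef

/-- `(T, E)` is a post-selected teleportation protocol with success probability `p ∈ (0,1]`. -/
def IsPSTeleportation {A B : Type*} [Fintype A] [Fintype B] [DecidableEq A] [DecidableEq B]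
    (T : Matrix (A × B) (A × B) ℂ) (E : Matrix (B × A) (B × A) ℂ) (p : ℝ) : Prop :=
  IsPOVMElement T ∧ IsDensityMatrix E ∧ 0 < p ∧ p ≤ 1 ∧
    ∀ ρ : Matrix A A ℂ, IsDensityMatrix ρ → teleMap T E ρ = (p : ℂ) • ρ

/-! Since density matrices span, `(T, E)` teleports with probability `p` iff the contraction of `T`
with `E` over `B` is `p |Ω⟩⟨Ω|`, with `Ω` the unnormalized maximally entangled vector. Purify `E`
and encode the purification as an operator `L`: the contraction becomes the compression
`(1 ⊗ L)† (T ⊗ 1) (1 ⊗ L)`. It can only be `p |Ω⟩⟨Ω|` if `L` is injective, and then the singular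
value decomposition of `L` is the Schmidt decomposition `∑ k, λ_k f_k ⊗ e_k` with all `λ_k ≠ 0`.
Let `S` be the operator with the same singular vectors and inverse singular values. As `L† S = 1`
and `S L† = L S† = Π`, conjugating by `1 ⊗ S` turns the equation into
`(1 ⊗ Π) (T ⊗ 1) (1 ⊗ Π) = p |S⟩⟨S|`, and back. The bound on `∑ k, 1 / λ_k²` is `T ≤ 1` tested on
`|S⟩`, and `|A| ≤ |B|` holds because the realigned `T` and `E` factor a multiple of the identity of
size `|A|²` through size `|B|²`. -/

open Matrix
open scoped Kronecker

section Rings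

variable {A B C D R : Type*}

/-- The contraction of `T` on `A ⊗ B` with `E` on `B ⊗ D` over the shared system `B`. It is the
Choi matrix of `ρ ↦ Tr_{AB} (T (ρ ⊗ E))`, so `E` enters with its two `D`-indices exchanged. -/
def contraction [Fintype B] [CommSemiring R]
    (T : Matrix (A × B) (A × B) R) (E : Matrix (B × D) (B × D) R) : Matrix (A × D) (A × D) R :=
  of fun z z' => ∑ b, ∑ b', T (z.1, b) (z'.1, b') * E (b', z'.2) (b, z.2)

/-- The unnormalized maximally entangled projector `|Ω⟩⟨Ω|` with `|Ω⟩ = ∑ a, |a⟩ ⊗ |a⟩`; in terms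
of Mathlib's vectorization, `|Ω⟩ = vec 1`. -/
def maxEntangled (A R : Type*) [DecidableEq A] [CommSemiring R] [StarRing R] :
    Matrix (A × A) (A × A) R :=
  vecMulVec (vec (1 : Matrix A A R)) (star (vec 1))

/-- The ampliation `T ⊗ 1` of an operator `T` on `A ⊗ B` by an ancilla `C`, acting on
`A ⊗ (B ⊗ C)`. -/
def ampliation (C : Type*) [DecidableEq C] [CommSemiring R] (T : Matrix (A × B) (A × B) R) :
    Matrix (A × B × C) (A × B × C) R :=
  (T ⊗ₖ (1 : Matrix C C R)).submatrix (Equiv.prodAssoc A B C).symm (Equiv.prodAssoc A B C).symm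

/-- The partial trace over the ancilla `C` of the rank-one matrix `|L⟩⟨L|`, where the vector
`|L⟩ ∈ (B ⊗ C) ⊗ D` is encoded as the operator `L` from `D` to `B ⊗ C` with the same entries. -/
def reducedState [Fintype C] [CommSemiring R] [StarRing R] (L : Matrix (B × C) D R) :
    Matrix (B × D) (B × D) R :=
  of fun z z' => ∑ y, L (z.1, y) z.2 * star (L (z'.1, y) z'.2)

/-- The operator `∑ k, x k • |f_k⟩⟨ē_k|`, where `f_k` are the columns of `F` and `e_k` the rows of
`U`. As a vector it is the Schmidt form `∑ k, x k • f_k ⊗ e_k`. -/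
def schmidtMatrix {m k n : Type*} [Fintype k] [DecidableEq k] [CommSemiring R]
    (F : Matrix m k R) (x : k → R) (U : Matrix k n R) : Matrix m n R :=
  F * diagonal x * U

theorem maxEntangled_apply [DecidableEq A] [CommSemiring R] [StarRing R] (z z' : A × A) :
    maxEntangled A R z z' = (1 : Matrix A A R) z.1 z.2 * (1 : Matrix A A R) z'.1 z'.2 := by
  simp only [maxEntangled, vecMulVec_apply, vec, Pi.star_apply, one_apply, apply_ite star,
    star_one, star_zero, eq_comm]

theorem ampliation_apply [DecidableEq C] [CommSemiring R] (T : Matrix (A × B) (A × B) R)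
    (z z' : A × B × C) :
    ampliation C T z z' = T (z.1, z.2.1) (z'.1, z'.2.1) * if z.2.2 = z'.2.2 then 1 else 0 :=
  rfl

theorem ampliation_one_sub [DecidableEq A] [DecidableEq B] [DecidableEq C] [CommRing R]
    (T : Matrix (A × B) (A × B) R) : ampliation C (1 - T) = 1 - ampliation C T := by
  ext z z'
  simp only [ampliation_apply, Matrix.sub_apply, one_apply, Prod.ext_iff, ite_and, mul_ite,
    mul_one, mul_zero]
  split_ifs <;> simp only [sub_self]

theorem one_kronecker_apply_eq_ite [DecidableEq A] [CommSemiring R] {m n : Type*}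
    (M : Matrix m n R) (z : A × m) (z' : A × n) :
    ((1 : Matrix A A R) ⊗ₖ M) z z' = if z.1 = z'.1 then M z.2 z'.2 else 0 := by
  simp only [kroneckerMap_apply, one_apply, ite_mul, one_mul, zero_mul]

theorem one_kronecker_compression_apply {m : Type*} [Fintype A] [Fintype m] [DecidableEq A]
    [CommSemiring R] [StarRing R] (L : Matrix m D R) (M : Matrix (A × m) (A × m) R)
    (z z' : A × D) :
    (((1 : Matrix A A R) ⊗ₖ L)ᴴ * M * ((1 : Matrix A A R) ⊗ₖ L)) z z' =
      ∑ x, ∑ x', star (L x z.2) * M (z.1, x) (z'.1, x') * L x' z'.2 := by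
  simp only [mul_apply, conjTranspose_apply, one_kronecker_apply_eq_ite, Fintype.sum_prod_type,
    apply_ite star, star_zero, ite_mul, zero_mul, mul_ite, mul_zero, Finset.sum_ite_irrel,
    Finset.sum_const_zero, Finset.sum_ite_eq', Finset.mem_univ, if_true, Finset.sum_mul]
  exact Finset.sum_comm

theorem contraction_reducedState [Fintype A] [Fintype B] [Fintype C] [DecidableEq A]
    [DecidableEq C] [CommSemiring R] [StarRing R]
    (T : Matrix (A × B) (A × B) R) (L : Matrix (B × C) D R) :
    contraction T (reducedState L) =
      ((1 : Matrix A A R) ⊗ₖ L)ᴴ * ampliation C T * ((1 : Matrix A A R) ⊗ₖ L) := by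
  ext z z'
  simp only [one_kronecker_compression_apply, contraction, reducedState, of_apply,
    ampliation_apply, Fintype.sum_prod_type, mul_ite, mul_one, mul_zero, ite_mul, zero_mul,
    Finset.sum_ite_eq, Finset.mem_univ, if_true, Finset.mul_sum]
  refine Finset.sum_congr rfl fun b _ => ?_
  rw [Finset.sum_comm]
  exact Finset.sum_congr rfl fun y _ => Finset.sum_congr rfl fun b' _ => by ring

theorem trace_reducedState [Fintype B] [Fintype C] [Fintype D] [CommSemiring R] [StarRing R]
    (L : Matrix (B × C) D R) : (reducedState L).trace = (Lᴴ * L).trace := by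
  rw [trace_mul_comm]
  simp only [trace, diag_apply, reducedState, of_apply, mul_apply, conjTranspose_apply,
    Fintype.sum_prod_type]
  exact Finset.sum_congr rfl fun b _ => Finset.sum_comm

section Schmidt

variable {m k n : Type*} [Fintype k] [DecidableEq k] [CommSemiring R]

theorem schmidtMatrix_apply (F : Matrix m k R) (x : k → R) (U : Matrix k n R) (i : m) (j : n) :
    schmidtMatrix F x U i j = ∑ l, x l * F i l * U l j := by
  simp only [schmidtMatrix, mul_apply (N := U), mul_diagonal, mul_comm]

theorem conjTranspose_schmidtMatrix_mul [Fintype m] [StarRing R] {F : Matrix m k R}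
    (hF : Fᴴ * F = 1) (x y : k → R) (U : Matrix k n R) :
    (schmidtMatrix F x U)ᴴ * schmidtMatrix F y U = Uᴴ * diagonal (star x * y) * U := by
  calc (schmidtMatrix F x U)ᴴ * schmidtMatrix F y U
      = Uᴴ * (diagonal (star x) * (Fᴴ * F) * diagonal y) * U := by
        simp only [schmidtMatrix, conjTranspose_mul, diagonal_conjTranspose, Matrix.mul_assoc]
    _ = Uᴴ * diagonal (star x * y) * U := by
        rw [hF, Matrix.mul_one, diagonal_mul_diagonal]
        rfl

theorem schmidtMatrix_mul_conjTranspose [Fintype n] [StarRing R] {U : Matrix k n R}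
    (hU : U * Uᴴ = 1) (F : Matrix m k R) (x y : k → R) :
    schmidtMatrix F x U * (schmidtMatrix F y U)ᴴ = F * diagonal (x * star y) * Fᴴ := by
  calc schmidtMatrix F x U * (schmidtMatrix F y U)ᴴ
      = F * (diagonal x * (U * Uᴴ) * diagonal (star y)) * Fᴴ := by
        simp only [schmidtMatrix, conjTranspose_mul, diagonal_conjTranspose, Matrix.mul_assoc]
    _ = F * diagonal (x * star y) * Fᴴ := by
        rw [hU, Matrix.mul_one, diagonal_mul_diagonal]
        rfl

theorem trace_conjTranspose_schmidtMatrix_mul [Fintype m] [Fintype n] [StarRing R]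
    {F : Matrix m k R} {U : Matrix k n R} (hF : Fᴴ * F = 1) (hU : U * Uᴴ = 1) (x : k → R) :
    ((schmidtMatrix F x U)ᴴ * schmidtMatrix F x U).trace = ∑ l, star (x l) * x l := by
  rw [conjTranspose_schmidtMatrix_mul hF, trace_mul_comm, ← Matrix.mul_assoc, hU, Matrix.one_mul,
    trace_diagonal]
  rfl

end Schmidt

theorem compression_eq_iff_of_conjTranspose_mul_eq_one {m n : Type*} [Fintype m] [Fintype n]
    [DecidableEq n] [CommSemiring R] [StarRing R] {W Z : Matrix m n R} (h : Wᴴ * Z = 1)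
    (M : Matrix m m R) (N : Matrix n n R) :
    Wᴴ * M * W = N ↔ Z * Wᴴ * M * (W * Zᴴ) = Z * N * Zᴴ := by
  have h' : Zᴴ * W = 1 := by simpa using congrArg conjTranspose h
  constructor
  · rintro rfl
    simp only [Matrix.mul_assoc]
  · intro hMN
    calc Wᴴ * M * W = (Wᴴ * Z) * (Wᴴ * M * W) * (Zᴴ * W) := by
          rw [h, h', Matrix.one_mul, Matrix.mul_one]
      _ = Wᴴ * (Z * Wᴴ * M * (W * Zᴴ)) * W := by simp only [Matrix.mul_assoc]
      _ = (Wᴴ * Z) * N * (Zᴴ * W) := by rw [hMN]; simp only [Matrix.mul_assoc]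
      _ = N := by rw [h, h', Matrix.one_mul, Matrix.mul_one]

theorem compression_eq_smul_maxEntangled_iff {m : Type*} [Fintype m] [Fintype A] [DecidableEq A]
    [CommSemiring R] [StarRing R] {L S : Matrix m A R} (hLS : Lᴴ * S = 1)
    (M : Matrix (A × m) (A × m) R) (c : R) :
    ((1 : Matrix A A R) ⊗ₖ L)ᴴ * M * ((1 : Matrix A A R) ⊗ₖ L) = c • maxEntangled A R ↔
      ((1 : Matrix A A R) ⊗ₖ (S * Lᴴ)) * M * ((1 : Matrix A A R) ⊗ₖ (L * Sᴴ)) =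
        c • vecMulVec (vec S) (star (vec S)) := by
  have hdual : ((1 : Matrix A A R) ⊗ₖ L)ᴴ * ((1 : Matrix A A R) ⊗ₖ S) = 1 := by
    rw [conjTranspose_kronecker, ← mul_kronecker_mul, hLS, conjTranspose_one, Matrix.one_mul,
      one_kronecker_one]
  have hvec : ((1 : Matrix A A R) ⊗ₖ S) * maxEntangled A R * ((1 : Matrix A A R) ⊗ₖ S)ᴴ =
      vecMulVec (vec S) (star (vec S)) := by
    rw [maxEntangled, mul_vecMulVec, vecMulVec_mul, ← star_mulVec, ← vec_mul_eq_mulVec,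
      Matrix.mul_one]
  rw [compression_eq_iff_of_conjTranspose_mul_eq_one hdual, Matrix.mul_smul, Matrix.smul_mul, hvec,
    conjTranspose_kronecker, conjTranspose_kronecker, ← mul_kronecker_mul, ← mul_kronecker_mul,
    conjTranspose_one, Matrix.one_mul]

/- Realigned, the contraction is the product of an `A² × B²` matrix by a `B² × A²` matrix, and
`|Ω⟩⟨Ω|` is the identity. -/
theorem card_le_card_of_contraction_eq {K : Type*} [Fintype A] [Fintype B] [DecidableEq A]
    [Field K] [StarRing K] {T : Matrix (A × B) (A × B) K} {E : Matrix (B × A) (B × A) K}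
    {c : K} (hc : c ≠ 0) (h : contraction T E = c • maxEntangled A K) :
    Fintype.card A ≤ Fintype.card B := by
  let T' : Matrix (A × A) (B × B) K := of fun i j => T (i.1, j.1) (i.2, j.2)
  let E' : Matrix (B × B) (A × A) K := of fun j i => E (j.2, i.2) (j.1, i.1)
  have hTE : T' * E' = c • 1 := by
    ext ⟨a, a'⟩ ⟨d, d'⟩
    have hentry := congrFun₂ h (a, d) (a', d')
    simp only [contraction, of_apply, Matrix.smul_apply, maxEntangled_apply] at hentry
    rw [Matrix.smul_apply, ← one_kronecker_one, kroneckerMap_apply, ← hentry, mul_apply,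
      Fintype.sum_prod_type]
    rfl
  have hinv : T' * (c⁻¹ • E') = 1 := by rw [Matrix.mul_smul, hTE, inv_smul_smul₀ hc]
  have hcard : Fintype.card (A × A) ≤ Fintype.card (B × B) :=
    calc Fintype.card (A × A) = (T' * (c⁻¹ • E')).rank := by rw [hinv, rank_one]
      _ ≤ T'.rank := rank_mul_le_left _ _
      _ ≤ Fintype.card (B × B) := rank_le_card_width _
  rw [Fintype.card_prod, Fintype.card_prod] at hcard
  exact Nat.mul_self_le_mul_self_iff.mp hcard

end Rings

section Positivity

variable {A B C D 𝕜 : Type*} [RCLike 𝕜]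

theorem ampliation_posSemidef [Finite A] [Finite B] [Finite C] [DecidableEq C]
    {T : Matrix (A × B) (A × B) 𝕜} (hT : T.PosSemidef) : (ampliation C T).PosSemidef :=
  (hT.kronecker PosSemidef.one).submatrix _

theorem exists_eq_reducedState_of_posSemidef [Finite B] [Finite D]
    {E : Matrix (B × D) (B × D) 𝕜} (hE : E.PosSemidef) :
    ∃ (m : ℕ) (L : Matrix (B × Fin m) D 𝕜), E = reducedState L := by
  obtain ⟨m, v, hv⟩ := posSemidef_iff_eq_sum_vecMulVec.mp hE
  refine ⟨m, of fun x d => v x.2 (x.1, d), ?_⟩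
  ext z z'
  simp only [hv, reducedState, of_apply, Matrix.sum_apply, vecMulVec_apply, Pi.star_apply]

theorem mulVec_injective_of_compression_eq {m : Type*} [Fintype m] [Fintype A] [DecidableEq A]
    {L : Matrix m A 𝕜} {M : Matrix (A × m) (A × m) 𝕜} {c : 𝕜} (hc : c ≠ 0)
    (h : ((1 : Matrix A A 𝕜) ⊗ₖ L)ᴴ * M * ((1 : Matrix A A 𝕜) ⊗ₖ L) = c • maxEntangled A 𝕜) :
    Function.Injective L.mulVec := by
  refine (injective_iff_map_eq_zero L.mulVecLin).mpr fun w hw => ?_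
  have hLw : L * vecMulVec w (star w) = 0 := by
    rw [mul_vecMulVec, show L *ᵥ w = 0 from hw, zero_vecMulVec]
  have hzero : maxEntangled A 𝕜 *ᵥ vec (vecMulVec w (star w)) = 0 := by
    refine (smul_eq_zero_iff_right hc).mp ?_
    rw [← smul_mulVec, ← h, ← mulVec_mulVec, ← vec_mul_eq_mulVec, hLw, vec_zero, mulVec_zero]
  have htrace : star (vec (1 : Matrix A A 𝕜)) ⬝ᵥ vec (vecMulVec w (star w)) = star w ⬝ᵥ w := by
    rw [star_vec_dotProduct_vec, conjTranspose_one, Matrix.one_mul, trace_vecMulVec,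
      dotProduct_comm]
  ext a
  have hdiag := congrFun hzero (a, a)
  rw [maxEntangled, vecMulVec_mulVec, htrace] at hdiag
  have hw0 : star w ⬝ᵥ w = 0 := by simpa using hdiag
  exact congrFun (dotProduct_star_self_eq_zero.mp hw0) a

theorem exists_schmidt_decomposition {m : Type*} [Fintype m] [Fintype A] [DecidableEq A]
    {L : Matrix m A 𝕜} (hL : Function.Injective L.mulVec) :
    ∃ (lam : A → ℝ) (F : Matrix m A 𝕜) (U : Matrix A A 𝕜), (∀ k, 0 < lam k) ∧
      Fᴴ * F = 1 ∧ U * Uᴴ = 1 ∧ L = schmidtMatrix F (fun k => (lam k : 𝕜)) U := by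
  have hpos : (Lᴴ * L).PosDef := .conjTranspose_mul_self L hL
  let V : Matrix A A 𝕜 := hpos.1.eigenvectorUnitary
  have hV : Vᴴ * V = 1 := Unitary.coe_star_mul_self hpos.1.eigenvectorUnitary
  have hV' : V * Vᴴ = 1 := Unitary.coe_mul_star_self hpos.1.eigenvectorUnitary
  let lam : A → ℝ := fun k => √(hpos.1.eigenvalues k)
  have hlam : ∀ k, 0 < lam k := fun k => Real.sqrt_pos.mpr (hpos.eigenvalues_pos k)
  have hlam0 : ∀ k, (lam k : 𝕜) ≠ 0 := fun k => RCLike.ofReal_ne_zero.mpr (hlam k).ne'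
  have hspec : Vᴴ * (Lᴴ * L) * V = diagonal fun k => (lam k : 𝕜) * lam k := by
    have hsq : ∀ k, (lam k : 𝕜) * lam k = hpos.1.eigenvalues k := fun k => by
      rw [← RCLike.ofReal_mul, Real.mul_self_sqrt (hpos.eigenvalues_pos k).le]
    simp only [hsq]
    have hdiag := hpos.1.conjStarAlgAut_star_eigenvectorUnitary
    rwa [Unitary.conjStarAlgAut_star_apply] at hdiag
  refine ⟨lam, L * V * diagonal fun k => (lam k : 𝕜)⁻¹, Vᴴ, hlam, ?_, ?_, ?_⟩
  · calc (L * V * diagonal fun k => (lam k : 𝕜)⁻¹)ᴴ * (L * V * diagonal fun k => (lam k : 𝕜)⁻¹)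
        = (diagonal fun k => (lam k : 𝕜)⁻¹)ᴴ * (Vᴴ * (Lᴴ * L) * V) *
            diagonal fun k => (lam k : 𝕜)⁻¹ := by
          simp only [conjTranspose_mul, Matrix.mul_assoc]
      _ = 1 := by
          rw [hspec]
          simp [diagonal_conjTranspose, diagonal_mul_diagonal, hlam0, Pi.star_def]
  · rwa [conjTranspose_conjTranspose]
  · have hdiag : (diagonal fun k => (lam k : 𝕜)⁻¹) * diagonal (fun k => (lam k : 𝕜)) = 1 := by
      simp [diagonal_mul_diagonal, hlam0]
    rw [schmidtMatrix, Matrix.mul_assoc (L * V), hdiag, Matrix.mul_one, Matrix.mul_assoc, hV',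
      Matrix.mul_one]

/- Testing `M ≤ 1` on `v` gives `0 ≤ ‖v‖² - c ‖v‖⁴`. -/
theorem smul_dotProduct_le_one_of_compression_eq {n : Type*} [Fintype n] [DecidableEq n]
    {M P : Matrix n n 𝕜} {v : n → 𝕜} {c : ℝ} (hM : (1 - M).PosSemidef) (hP : P.IsHermitian)
    (hPv : P *ᵥ v = v) (h : P * M * P = (c : 𝕜) • vecMulVec v (star v)) :
    (c : 𝕜) * (star v ⬝ᵥ v) ≤ 1 := by
  have hMv : star v ⬝ᵥ M *ᵥ v = c * (star v ⬝ᵥ v) * (star v ⬝ᵥ v) :=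
    calc star v ⬝ᵥ M *ᵥ v = star (P *ᵥ v) ⬝ᵥ M *ᵥ (P *ᵥ v) := by rw [hPv]
      _ = star v ⬝ᵥ (P * M * P) *ᵥ v := by
          rw [star_mulVec, hP.eq, ← dotProduct_mulVec, mulVec_mulVec, mulVec_mulVec]
      _ = c * (star v ⬝ᵥ v) * (star v ⬝ᵥ v) := by
          rw [h, smul_mulVec, vecMulVec_mulVec, dotProduct_smul, dotProduct_smul]
          simp [mul_assoc]
  have hnonneg := hM.dotProduct_mulVec_nonneg v
  rw [sub_mulVec, one_mulVec, dotProduct_sub, hMv] at hnonneg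
  obtain ⟨r, hr, hvr⟩ := RCLike.nonneg_iff_exists_ofReal.mp (dotProduct_star_self_nonneg v)
  rw [← hvr] at hnonneg ⊢
  norm_cast at hnonneg ⊢
  by_contra! hcr
  have hr0 : 0 < r := hr.lt_of_ne' (by rintro rfl; norm_num at hcr)
  nlinarith [mul_pos hr0 (sub_pos.mpr hcr)]

end Positivity

section Teleportation

variable {A B : Type*} [Fintype A] [Fintype B]

open scoped Matrix.Norms.L2Operator MatrixOrder in
theorem span_setOf_isDensityMatrix (A : Type*) [Fintype A] :
    Submodule.span ℂ {ρ : Matrix A A ℂ | IsDensityMatrix ρ} = ⊤ := by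
  classical
  rw [eq_top_iff, ← CStarAlgebra.span_nonneg, Submodule.span_le]
  intro ρ hρ
  have hρ' : ρ.PosSemidef := nonneg_iff_posSemidef.mp hρ
  by_cases h0 : ρ.trace = 0
  · rw [hρ'.trace_eq_zero_iff.mp h0]
    exact Submodule.zero_mem _
  · rw [← smul_inv_smul₀ h0 ρ]
    refine Submodule.smul_mem _ _ (Submodule.subset_span ⟨?_, ?_⟩)
    · exact hρ'.smul (inv_nonneg.mpr hρ'.trace_nonneg)
    · rw [trace_smul, smul_eq_mul, inv_mul_cancel₀ h0]

theorem teleMap_apply (T : Matrix (A × B) (A × B) ℂ) (E : Matrix (B × A) (B × A) ℂ)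
    (ρ : Matrix A A ℂ) (c c' : A) :
    teleMap T E ρ c c' = ∑ a, ∑ a', contraction T E (a, c') (a', c) * ρ a' a := by
  simp only [teleMap, contraction, of_apply, Finset.sum_mul, mul_right_comm]

theorem isLinearMap_teleMap (T : Matrix (A × B) (A × B) ℂ) (E : Matrix (B × A) (B × A) ℂ) :
    IsLinearMap ℂ (teleMap T E) where
  map_add ρ σ := by
    ext c c'
    simp only [teleMap_apply, Matrix.add_apply, mul_add, Finset.sum_add_distrib]
  map_smul r ρ := by
    ext c c'
    simp only [teleMap_apply, Matrix.smul_apply, smul_eq_mul, Finset.mul_sum, mul_left_comm]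

theorem teleMap_eq_smul_iff_contraction_eq [DecidableEq A] (T : Matrix (A × B) (A × B) ℂ)
    (E : Matrix (B × A) (B × A) ℂ) (c : ℂ) :
    (∀ ρ : Matrix A A ℂ, IsDensityMatrix ρ → teleMap T E ρ = c • ρ) ↔
      contraction T E = c • maxEntangled A ℂ := by
  constructor
  · intro h
    have hmap : (isLinearMap_teleMap T E).mk' _ = c • LinearMap.id :=
      LinearMap.ext_on (span_setOf_isDensityMatrix A) h
    ext ⟨a, d⟩ ⟨a', d'⟩
    have hsingle := congrFun₂ (LinearMap.congr_fun hmap (single a' a 1)) d' d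
    simpa [teleMap_apply, single_apply, ite_and, maxEntangled_apply, one_apply] using hsingle
  · intro h ρ _
    ext d d'
    simp [teleMap_apply, h, maxEntangled_apply, one_apply]

end Teleportation

section Realization

variable {A B C : Type*} [Fintype A] [Fintype B] [Fintype C] [DecidableEq A] [DecidableEq C]
  {T : Matrix (A × B) (A × B) ℂ} {E : Matrix (B × A) (B × A) ℂ} {p : ℝ} {lam : A → ℝ}
  {F : Matrix (B × C) A ℂ} {U : Matrix A A ℂ}

/-- The pair `(T, E)` has the structure forced by teleportation with success probability `p`, in
terms of Schmidt coefficients `lam`, an isometry `F` with columns `f_k` and a unitary `U` with rows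
`e_k`: `E` is the reduction of `|λ⟩ = ∑ k, lam k • f_k ⊗ e_k`, and compressing `T ⊗ 1` to the range
of `F` gives `|τ⟩⟨τ|` with `|τ⟩ = √p ∑ k, (lam k)⁻¹ • e_k ⊗ f_k`. -/
structure IsSchmidtRealization (T : Matrix (A × B) (A × B) ℂ) (E : Matrix (B × A) (B × A) ℂ)
    (p : ℝ) (lam : A → ℝ) (F : Matrix (B × C) A ℂ) (U : Matrix A A ℂ) : Prop where
  unitary : U * Uᴴ = 1
  isometry : Fᴴ * F = 1
  state_eq : E = reducedState (schmidtMatrix F (fun k => (lam k : ℂ)) U)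
  effect_eq :
    ((1 : Matrix A A ℂ) ⊗ₖ (F * Fᴴ)) * ampliation C T * ((1 : Matrix A A ℂ) ⊗ₖ (F * Fᴴ)) =
      (p : ℂ) • vecMulVec (vec (schmidtMatrix F (fun k => (lam k : ℂ)⁻¹) U))
        (star (vec (schmidtMatrix F (fun k => (lam k : ℂ)⁻¹) U)))

theorem contraction_reducedState_schmidtMatrix_eq_iff (hF : Fᴴ * F = 1) (hU : U * Uᴴ = 1)
    (hlam : ∀ k, lam k ≠ 0) (c : ℂ) :
    contraction T (reducedState (schmidtMatrix F (fun k => (lam k : ℂ)) U)) =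
        c • maxEntangled A ℂ ↔
      ((1 : Matrix A A ℂ) ⊗ₖ (F * Fᴴ)) * ampliation C T * ((1 : Matrix A A ℂ) ⊗ₖ (F * Fᴴ)) =
        c • vecMulVec (vec (schmidtMatrix F (fun k => (lam k : ℂ)⁻¹) U))
          (star (vec (schmidtMatrix F (fun k => (lam k : ℂ)⁻¹) U))) := by
  let x : A → ℂ := fun k => lam k
  let y : A → ℂ := fun k => (lam k : ℂ)⁻¹
  have hxy : star x * y = 1 := by
    ext k
    simp [x, y, hlam k]
  have hxy' : x * star y = 1 := by simpa using congrArg star hxy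
  have hdual : (schmidtMatrix F x U)ᴴ * schmidtMatrix F y U = 1 := by
    rw [conjTranspose_schmidtMatrix_mul hF, hxy, diagonal_one', Matrix.mul_one,
      mul_eq_one_comm.mp hU]
  rw [contraction_reducedState, compression_eq_smul_maxEntangled_iff hdual,
    schmidtMatrix_mul_conjTranspose hU, schmidtMatrix_mul_conjTranspose hU, mul_comm y, hxy, hxy',
    diagonal_one', Matrix.mul_one]

theorem exists_isSchmidtRealization_of_contraction_eq (hE : E.PosSemidef) (hp : p ≠ 0)
    (h : contraction T E = (p : ℂ) • maxEntangled A ℂ) :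
    ∃ (lam : A → ℝ) (m : ℕ) (F : Matrix (B × Fin m) A ℂ) (U : Matrix A A ℂ),
      (∀ k, lam k ≠ 0) ∧ IsSchmidtRealization T E p lam F U := by
  obtain ⟨m, L, rfl⟩ := exists_eq_reducedState_of_posSemidef hE
  have hL : Function.Injective L.mulVec :=
    mulVec_injective_of_compression_eq (Complex.ofReal_ne_zero.mpr hp)
      (contraction_reducedState T L ▸ h)
  obtain ⟨lam, F, U, hlam, hF, hU, rfl⟩ := exists_schmidt_decomposition hL
  have hlam0 : ∀ k, lam k ≠ 0 := fun k => (hlam k).ne'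
  exact ⟨lam, m, F, U, hlam0, hU, hF, rfl,
    (contraction_reducedState_schmidtMatrix_eq_iff hF hU hlam0 _).mp h⟩

namespace IsSchmidtRealization

theorem contraction_eq (h : IsSchmidtRealization T E p lam F U) (hlam : ∀ k, lam k ≠ 0) :
    contraction T E = (p : ℂ) • maxEntangled A ℂ := by
  rw [h.state_eq]
  exact (contraction_reducedState_schmidtMatrix_eq_iff h.isometry h.unitary hlam
    _).mpr h.effect_eq

theorem trace_eq_sum_sq (h : IsSchmidtRealization T E p lam F U) :
    E.trace = ((∑ k, lam k ^ 2 : ℝ) : ℂ) := by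
  rw [h.state_eq, trace_reducedState, trace_conjTranspose_schmidtMatrix_mul h.isometry h.unitary]
  simp [sq]

theorem nonempty_ancilla (h : IsSchmidtRealization T E p lam F U) (hE : E ≠ 0) : Nonempty C := by
  by_contra hC
  rw [not_nonempty_iff] at hC
  refine hE ?_
  rw [h.state_eq]
  ext z z'
  simp [reducedState]

theorem sum_one_div_sq_le [DecidableEq B] (h : IsSchmidtRealization T E p lam F U)
    (hT : (1 - T).PosSemidef) (hp : 0 < p) : ∑ k, 1 / lam k ^ 2 ≤ 1 / p := by
  let S := schmidtMatrix F (fun k => (lam k : ℂ)⁻¹) U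
  have hM : (1 - ampliation C T).PosSemidef :=
    ampliation_one_sub (C := C) T ▸ ampliation_posSemidef hT
  have hP : ((1 : Matrix A A ℂ) ⊗ₖ (F * Fᴴ)).IsHermitian := by
    rw [IsHermitian, conjTranspose_kronecker, conjTranspose_one, conjTranspose_mul,
      conjTranspose_conjTranspose]
  have hPS : ((1 : Matrix A A ℂ) ⊗ₖ (F * Fᴴ)) *ᵥ vec S = vec S := by
    rw [← vec_mul_eq_mulVec]
    simp only [S, schmidtMatrix, Matrix.mul_assoc]
    rw [← Matrix.mul_assoc Fᴴ, h.isometry, Matrix.one_mul]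
  have hnorm : star (vec S) ⬝ᵥ vec S = ((∑ k, 1 / lam k ^ 2 : ℝ) : ℂ) := by
    rw [star_vec_dotProduct_vec, trace_conjTranspose_schmidtMatrix_mul h.isometry h.unitary]
    simp [sq]
  have hle : (p : ℂ) * (star (vec S) ⬝ᵥ vec S) ≤ 1 :=
    smul_dotProduct_le_one_of_compression_eq hM hP hPS h.effect_eq
  rw [hnorm] at hle
  rw [le_div_iff₀' hp]
  exact_mod_cast hle

end IsSchmidtRealization

theorem smul_vecMulVec_vec_schmidtMatrix {m : Type*} (hp : 0 ≤ p) (e : A → A → ℂ)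
    (f : A → m → ℂ) :
    (p : ℂ) • vecMulVec (vec (schmidtMatrix (of f)ᵀ (fun k => (lam k : ℂ)⁻¹) (of e)))
        (star (vec (schmidtMatrix (of f)ᵀ (fun k => (lam k : ℂ)⁻¹) (of e)))) =
      of fun z z' : A × m =>
        (((√p : ℝ) : ℂ) * ∑ k : A, (1 / (lam k : ℂ)) * e k z.1 * f k z.2) *
          (starRingEnd ℂ) (((√p : ℝ) : ℂ) * ∑ k : A, (1 / (lam k : ℂ)) * e k z'.1 * f k z'.2) := by
  have hsqrt : (p : ℂ) = (√p : ℝ) * (√p : ℝ) := by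
    rw [← Complex.ofReal_mul, Real.mul_self_sqrt hp]
  have hentry : ∀ z : A × m, vec (schmidtMatrix (of f)ᵀ (fun k => (lam k : ℂ)⁻¹) (of e)) z =
      ∑ k : A, (1 / (lam k : ℂ)) * e k z.1 * f k z.2 := fun z => by
    simp only [vec, schmidtMatrix_apply, transpose_apply, of_apply, one_div, mul_right_comm]
  ext z z'
  simp only [Matrix.smul_apply, vecMulVec_apply, Pi.star_apply, hentry, of_apply, smul_eq_mul,
    map_mul, Complex.conj_ofReal, hsqrt]
  rw [starRingEnd_apply]
  ring

theorem isSchmidtRealization_iff (hp : 0 ≤ p) (e : A → A → ℂ) (f : A → B × C → ℂ) :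
    IsSchmidtRealization T E p lam (of f)ᵀ (of e) ↔
      (∀ k l : A, (∑ a : A, (starRingEnd ℂ) (e k a) * e l a) = if k = l then 1 else 0) ∧
      (∀ k l : A, (∑ x : B × C, (starRingEnd ℂ) (f k x) * f l x) = if k = l then 1 else 0) ∧
      (∀ (b : B) (c : A) (b' : B) (c' : A), E (b, c) (b', c') =
        ∑ y : C, (∑ k : A, (lam k : ℂ) * f k (b, y) * e k c) *
          (starRingEnd ℂ) (∑ k : A, (lam k : ℂ) * f k (b', y) * e k c')) ∧
      ((of fun z z' : A × (B × C) =>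
          (if z.1 = z'.1 then (1 : ℂ) else 0) *
            ∑ k : A, f k z.2 * (starRingEnd ℂ) (f k z'.2)) *
        (of fun z z' : A × (B × C) =>
          T (z.1, z.2.1) (z'.1, z'.2.1) * (if z.2.2 = z'.2.2 then (1 : ℂ) else 0)) *
        (of fun z z' : A × (B × C) =>
          (if z.1 = z'.1 then (1 : ℂ) else 0) *
            ∑ k : A, f k z.2 * (starRingEnd ℂ) (f k z'.2)) =
      of fun z z' : A × (B × C) =>
        (((√p : ℝ) : ℂ) * ∑ k : A, (1 / (lam k : ℂ)) * e k z.1 * f k z.2) *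
          (starRingEnd ℂ) (((√p : ℝ) : ℂ) * ∑ k : A, (1 / (lam k : ℂ)) * e k z'.1 * f k z'.2)) := by
  have hunitary : of e * (of e)ᴴ = 1 ↔
      ∀ k l : A, (∑ a : A, (starRingEnd ℂ) (e k a) * e l a) = if k = l then 1 else 0 := by
    rw [← Matrix.ext_iff, forall_comm]
    simp only [mul_apply, conjTranspose_apply, of_apply, one_apply, mul_comm, starRingEnd_apply,
      eq_comm]
  have hisometry : (of f)ᵀᴴ * (of f)ᵀ = 1 ↔
      ∀ k l : A, (∑ x : B × C, (starRingEnd ℂ) (f k x) * f l x) = if k = l then 1 else 0 := by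
    rw [← Matrix.ext_iff]
    rfl
  have hstate : E = reducedState (schmidtMatrix (of f)ᵀ (fun k => (lam k : ℂ)) (of e)) ↔
      ∀ (b : B) (c : A) (b' : B) (c' : A), E (b, c) (b', c') =
        ∑ y : C, (∑ k : A, (lam k : ℂ) * f k (b, y) * e k c) *
          (starRingEnd ℂ) (∑ k : A, (lam k : ℂ) * f k (b', y) * e k c') := by
    rw [← Matrix.ext_iff, Prod.forall]
    simp only [Prod.forall, reducedState, of_apply, schmidtMatrix_apply]
    rfl
  have hprojection : (1 : Matrix A A ℂ) ⊗ₖ ((of f)ᵀ * (of f)ᵀᴴ) = of fun z z' : A × (B × C) =>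
      (if z.1 = z'.1 then (1 : ℂ) else 0) * ∑ k : A, f k z.2 * (starRingEnd ℂ) (f k z'.2) :=
    rfl
  rw [← hunitary, ← hisometry, ← hstate, ← hprojection, ← smul_vecMulVec_vec_schmidtMatrix hp]
  exact ⟨fun h => ⟨h.unitary, h.isometry, h.state_eq, h.effect_eq⟩,
    fun ⟨hU, hF, hE, hT⟩ => ⟨hU, hF, hE, hT⟩⟩

theorem self_testing_of_ps_teleportation_general [DecidableEq B] (hT : (1 - T).PosSemidef)
    (hE : IsDensityMatrix E) (hp : 0 < p) :
    (∀ ρ : Matrix A A ℂ, IsDensityMatrix ρ → teleMap T E ρ = (p : ℂ) • ρ) ↔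
      Fintype.card A ≤ Fintype.card B ∧ ∃ lam : A → ℝ, (∀ k, lam k ≠ 0) ∧
        ∑ k, lam k ^ 2 = 1 ∧ ∑ k, 1 / lam k ^ 2 ≤ 1 / p ∧ ∃ m : ℕ, 0 < m ∧
          ∃ (e : A → A → ℂ) (f : A → B × Fin m → ℂ),
            IsSchmidtRealization T E p lam (of f)ᵀ (of e) := by
  rw [teleMap_eq_smul_iff_contraction_eq]
  constructor
  · intro h
    obtain ⟨lam, m, F, U, hlam, hreal⟩ :=
      exists_isSchmidtRealization_of_contraction_eq hE.1 hp.ne' h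
    have hsum : ∑ k, lam k ^ 2 = 1 := Complex.ofReal_eq_one.mp (hreal.trace_eq_sum_sq ▸ hE.2)
    have hE0 : E ≠ 0 := by
      rintro rfl
      simpa using hE.2
    exact ⟨card_le_card_of_contraction_eq (Complex.ofReal_ne_zero.mpr hp.ne') h, lam, hlam, hsum,
      hreal.sum_one_div_sq_le hT hp, m, Fin.pos_iff_nonempty.mpr (hreal.nonempty_ancilla hE0), U,
      Fᵀ, hreal⟩
  · rintro ⟨-, lam, hlam, -, -, m, -, e, f, hreal⟩
    exact hreal.contraction_eq hlam

end Realization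

/-- self-testing of post-selected teleportation implementations.
Given a POVM element `T`, a density matrix `E` and `p ∈ (0,1]`, the pair `(T,E)`
is a post-selected teleportation protocol with success probability `p` iff
`|B| ≥ |A|` and there exist nonzero real Schmidt coefficients `lam : A → ℝ` with
`∑ lam k ^ 2 = 1` and `∑ 1/lam k ^ 2 ≤ 1/p`, an ancilla `B' = Fin m` (nonempty finite),
an orthonormal basis `e` of `ℂ^A` and an orthonormal family `f` in `ℂ^{B × B'}`,
such that `E` is the partial trace over `B'` of `|λ⟩⟨λ|` and
`(1_A ⊗ Π) (T ⊗ 1_{B'}) (1_A ⊗ Π) = |τ⟩⟨τ|`. -/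
theorem self_testing_of_ps_teleportation
    {A B : Type*} [Fintype A] [Fintype B] [DecidableEq A] [DecidableEq B]
    [Nonempty A] [Nonempty B]
    (T : Matrix (A × B) (A × B) ℂ) (E : Matrix (B × A) (B × A) ℂ) (p : ℝ)
    (hT : IsPOVMElement T) (hE : IsDensityMatrix E) (hp0 : 0 < p) (hp1 : p ≤ 1) :
    (∀ ρ : Matrix A A ℂ, IsDensityMatrix ρ → teleMap T E ρ = (p : ℂ) • ρ)
      ↔
    (Fintype.card A ≤ Fintype.card B ∧
      ∃ lam : A → ℝ,
        (∀ k, lam k ≠ 0) ∧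
        (∑ k : A, lam k ^ 2) = 1 ∧
        (∑ k : A, 1 / lam k ^ 2) ≤ 1 / p ∧
        ∃ m : ℕ, 0 < m ∧
          ∃ (e : A → A → ℂ) (f : A → B × Fin m → ℂ),
            -- `e` is an orthonormal basis of `ℂ^A` (an orthonormal family of size `|A|`)
            (∀ k l : A, (∑ a : A, (starRingEnd ℂ) (e k a) * e l a)
                = if k = l then 1 else 0) ∧
            -- `f` is an orthonormal family in `ℂ^{B × B'}`
            (∀ k l : A, (∑ x : B × Fin m, (starRingEnd ℂ) (f k x) * f l x)
                = if k = l then 1 else 0) ∧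
            -- `E` is the partial trace over `B'` of `|λ⟩⟨λ|`,
            -- where `|λ⟩ = ∑ k, lam k • (f k ⊗ e k)`
            (∀ (b : B) (c : A) (b' : B) (c' : A),
              E (b, c) (b', c') =
                ∑ y : Fin m,
                  (∑ k : A, (lam k : ℂ) * f k (b, y) * e k c) *
                  (starRingEnd ℂ) (∑ k : A, (lam k : ℂ) * f k (b', y) * e k c')) ∧
            -- `(1_A ⊗ Π)(T ⊗ 1_{B'})(1_A ⊗ Π) = |τ⟩⟨τ|`,
            -- with `Π = ∑ k, f k (f k)†` and `|τ⟩ = √p ∑ k, (1/lam k) • (e k ⊗ f k)`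
            ((Matrix.of fun z z' : A × (B × Fin m) =>
                (if z.1 = z'.1 then (1 : ℂ) else 0) *
                  ∑ k : A, f k z.2 * (starRingEnd ℂ) (f k z'.2)) *
             (Matrix.of fun z z' : A × (B × Fin m) =>
                T (z.1, z.2.1) (z'.1, z'.2.1) *
                  (if z.2.2 = z'.2.2 then (1 : ℂ) else 0)) *
             (Matrix.of fun z z' : A × (B × Fin m) =>
                (if z.1 = z'.1 then (1 : ℂ) else 0) *
                  ∑ k : A, f k z.2 * (starRingEnd ℂ) (f k z'.2))
            = Matrix.of fun z z' : A × (B × Fin m) =>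
                (((Real.sqrt p : ℝ) : ℂ) *
                    ∑ k : A, (1 / (lam k : ℂ)) * e k z.1 * f k z.2) *
                (starRingEnd ℂ)
                  (((Real.sqrt p : ℝ) : ℂ) *
                    ∑ k : A, (1 / (lam k : ℂ)) * e k z'.1 * f k z'.2))) := by
  rw [self_testing_of_ps_teleportation_general hT.2 hE hp0]
  simp only [isSchmidtRealization_iff hp0.le]
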